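/- Let A be an inseparable C*-algebra, B a separable C*-subalgebra of A, and g a pure state of A. Then there exists a separable C*-subalgebra C of A with B ⊆ C such that the restriction g|_C is a pure state of C. -/

import Mathlib

open scoped ComplexOrder
noncomputable section

variable {A : Type*} [NormedRing A] [StarRing A] [CStarRing A] [NormedAlgebra ℂ A]
  [CompleteSpace A] [StarModule ℂ A]

/-- A state on a unital C*-algebra: a positive linear functional sending 1 to 1. -/
def IsState {A : Type*} [Ring A] [StarRing A] [Algebra ℂ A] (g : A →ₗ[ℂ] ℂ) : Prop :=
  g 1 = 1 ∧ ∀ a : A, 0 ≤ g (star a * a)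

/-- A pure state: a state that is an extreme point of the state space. -/
def IsPureState {A : Type*} [Ring A] [StarRing A] [Algebra ℂ A] (g : A →ₗ[ℂ] ℂ) : Prop :=
  IsState g ∧ ∀ g₁ g₂ : A →ₗ[ℂ] ℂ, IsState g₁ → IsState g₂ →
    g = (2:ℂ)⁻¹ • g₁ + (2:ℂ)⁻¹ • g₂ → g₁ = g₂

/-- The inclusion of a star subalgebra as a linear map. -/
def inclL (B : StarSubalgebra ℂ A) : B →ₗ[ℂ] A where
  toFun := (↑)
  map_add' _ _ := rfl
  map_smul' _ _ := rfl

/-!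
On a unital C*-algebra the states are exactly the contractive functionals with value `1` at `1`.
Hence states of a C*-subalgebra `C` extend to states of `A`, and the states of `A` form a weak-*
compact set. Purity of `g` says that no pair of states of `A` that differ at a point `a` has
midpoint `g`. Such pairs form a σ-compact set, so countably many elements of `A` already witness
that none of them has midpoint `g`. Repeatedly adjoining witnesses for a countable dense subset
yields a separable `C` such that states of `A` with midpoint `g` on `C` agree on `C`; since states
extend, `g|_C` is pure.
-/

open TopologicalSpace

lemma countable_submonoidClosure {M : Type*} [Monoid M] {s : Set M} (hs : s.Countable) :
    (Submonoid.closure s : Set M).Countable := by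
  have : Countable s := hs.to_subtype
  rw [Submonoid.closure_eq_mrange, MonoidHom.coe_mrange]
  exact Set.countable_range _

lemma isSeparable_starAdjoin (𝕜 : Type*) {E : Type*} [CommSemiring 𝕜] [StarRing 𝕜]
    [TopologicalSpace 𝕜] [SeparableSpace 𝕜] [Semiring E] [StarRing E] [Algebra 𝕜 E]
    [StarModule 𝕜 E] [TopologicalSpace E] [IsTopologicalSemiring E] [ContinuousStar E]
    [ContinuousSMul 𝕜 E] {s : Set E} (hs : IsSeparable s) :
    IsSeparable (StarAlgebra.adjoin 𝕜 s : Set E) := by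
  obtain ⟨c, hc, hsc⟩ := hs
  have hadj : IsSeparable (StarAlgebra.adjoin 𝕜 c : Set E) := by
    have hgen : (c ∪ star c).Countable := hc.union (hc.preimage star_injective)
    have hspan := (countable_submonoidClosure hgen).isSeparable.span (R := 𝕜)
    rwa [← StarAlgebra.adjoin_eq_span] at hspan
  have hle : StarAlgebra.adjoin 𝕜 s ≤ (StarAlgebra.adjoin 𝕜 c).topologicalClosure :=
    StarAlgebra.adjoin_le (hsc.trans (closure_mono (StarAlgebra.subset_adjoin 𝕜 c)))
  exact hadj.closure.mono hle

lemma isLindelof_inter_preimage_of_isOpen {X Y : Type*} [TopologicalSpace X]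
    [PseudoEMetricSpace Y] {K : Set X} (hK : IsCompact K) {f : X → Y} (hf : Continuous f)
    {U : Set Y} (hU : IsOpen U) : IsLindelof (K ∩ f ⁻¹' U) := by
  obtain ⟨F, hF, -, rfl, -⟩ := hU.exists_iUnion_isClosed
  rw [Set.preimage_iUnion, Set.inter_iUnion]
  exact isLindelof_iUnion fun n => (hK.inter_right ((hF n).preimage hf)).isLindelof

section States

section Algebraic

variable {R : Type*} [Ring R] [StarRing R] [Algebra ℂ R] [StarModule ℂ R] {φ : R →ₗ[ℂ] ℂ}

lemma IsState.map_star (hφ : IsState φ) (a : R) : φ (star a) = star (φ a) := by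
  have him_sq : (φ (star a * a)).im = 0 := (Complex.nonneg_iff.1 (hφ.2 a)).2.symm
  have hexpand (c : ℂ) : φ (star (c • a + 1) * (c • a + 1)) =
      star c * c * φ (star a * a) + star c * φ (star a) + c * φ a + 1 := by
    simp only [star_add, star_smul, star_one, add_mul, mul_add, smul_mul_assoc, mul_smul_comm,
      mul_one, one_mul, map_add, map_smul, hφ.1, smul_eq_mul]
    ring
  have him (c : ℂ) :
      (star c * c * φ (star a * a) + star c * φ (star a) + c * φ a + 1).im = 0 := by
    rw [← hexpand]
    exact (Complex.nonneg_iff.1 (hφ.2 (c • a + 1))).2.symm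
  have him_add : (φ (star a)).im + (φ a).im = 0 := by
    simpa [him_sq] using him 1
  have hre_sub : -(φ (star a)).re + (φ a).re = 0 := by
    simpa [him_sq] using him Complex.I
  exact Complex.ext (by rw [Complex.star_def, Complex.conj_re]; linarith)
    (by rw [Complex.star_def, Complex.conj_im]; linarith)

lemma IsState.norm_apply_sq_le (hφ : IsState φ) (a : R) :
    ((‖φ a‖ ^ 2 : ℝ) : ℂ) ≤ φ (star a * a) := by
  have hnonneg := hφ.2 (a - φ a • 1)
  have hexpand : φ (star (a - φ a • 1) * (a - φ a • 1)) = φ (star a * a) - star (φ a) * φ a := by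
    simp only [star_sub, star_smul, star_one, sub_mul, mul_sub, mul_smul_comm, smul_mul_assoc,
      mul_one, one_mul, map_sub, map_smul, hφ.map_star, hφ.1, smul_eq_mul]
    ring
  rw [hexpand, sub_nonneg] at hnonneg
  simpa [← Complex.conj_mul'] using hnonneg

end Algebraic

variable {A : Type*} [CStarAlgebra A]

lemma exists_star_mul_self_eq_norm_sq_sub (a : A) :
    ∃ b : A, star b * b = algebraMap ℝ A (‖a‖ ^ 2) - star a * a := by
  let _ := CStarAlgebra.spectralOrder A
  have := CStarAlgebra.spectralOrderedRing A
  obtain ⟨b, hb⟩ := CStarAlgebra.nonneg_iff_eq_star_mul_self.1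
    (sub_nonneg.2 (CStarAlgebra.star_mul_le_algebraMap_norm_sq (a := a)))
  exact ⟨b, hb.symm⟩

lemma norm_norm_sq_sub_star_mul_self_le (a : A) :
    ‖algebraMap ℝ A (‖a‖ ^ 2) - star a * a‖ ≤ ‖a‖ ^ 2 := by
  let _ := CStarAlgebra.spectralOrder A
  have := CStarAlgebra.spectralOrderedRing A
  rcases subsingleton_or_nontrivial A with _ | _
  · simp [Subsingleton.elim (_ - _ : A) 0]
  have hle : ‖algebraMap ℝ A (‖a‖ ^ 2) - star a * a‖ ≤ ‖algebraMap ℝ A (‖a‖ ^ 2)‖ :=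
    CStarAlgebra.norm_le_norm_of_nonneg_of_le
      (sub_nonneg.2 CStarAlgebra.star_mul_le_algebraMap_norm_sq)
      (sub_le_self _ (star_mul_self_nonneg a))
  rwa [norm_algebraMap', Real.norm_of_nonneg (sq_nonneg _)] at hle

lemma norm_add_I_mul_sq_le {a : A} (ha : IsSelfAdjoint a) (t : ℝ) :
    ‖a + algebraMap ℂ A (t * Complex.I)‖ ^ 2 ≤ ‖a‖ ^ 2 + t ^ 2 := by
  rcases subsingleton_or_nontrivial A with _ | _
  · rw [Subsingleton.elim (a + _) 0, norm_zero, zero_pow two_ne_zero]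
    positivity
  have hsq : star (a + algebraMap ℂ A (t * Complex.I)) * (a + algebraMap ℂ A (t * Complex.I)) =
      a * a + algebraMap ℂ A (t ^ 2) := by
    have hstar : star (algebraMap ℂ A (t * Complex.I)) = -algebraMap ℂ A (t * Complex.I) := by
      rw [← algebraMap_star_comm, ← map_neg, Complex.star_def, map_mul, Complex.conj_ofReal,
        Complex.conj_I, mul_neg]
    have hmul : algebraMap ℂ A (t * Complex.I) * algebraMap ℂ A (t * Complex.I) =
        -algebraMap ℂ A (t ^ 2) := by
      rw [← map_mul, mul_mul_mul_comm, Complex.I_mul_I, ← map_neg, mul_neg_one, sq]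
    rw [star_add, ha.star_eq, hstar, add_mul, mul_add, mul_add, neg_mul, neg_mul, hmul, neg_neg,
      Algebra.commutes]
    abel
  calc ‖a + algebraMap ℂ A (t * Complex.I)‖ ^ 2
      = ‖a * a + algebraMap ℂ A (t ^ 2)‖ := by rw [← hsq, CStarRing.norm_star_mul_self, sq]
    _ ≤ ‖a * a‖ + ‖algebraMap ℂ A (t ^ 2)‖ := norm_add_le _ _
    _ ≤ ‖a‖ ^ 2 + t ^ 2 := by
      rw [norm_algebraMap', norm_pow, Complex.norm_real, Real.norm_eq_abs, sq_abs, sq ‖a‖]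
      gcongr
      exact norm_mul_le a a

lemma IsState.norm_apply_le {φ : A →ₗ[ℂ] ℂ} (hφ : IsState φ) (a : A) : ‖φ a‖ ≤ ‖a‖ := by
  obtain ⟨b, hb⟩ := exists_star_mul_self_eq_norm_sq_sub a
  have hbound : φ (star a * a) ≤ ((‖a‖ ^ 2 : ℝ) : ℂ) := by
    have hnonneg := hφ.2 b
    rw [hb, map_sub, sub_nonneg, Algebra.algebraMap_eq_smul_one, ← Complex.coe_smul, map_smul,
      hφ.1] at hnonneg
    simpa using hnonneg
  exact (sq_le_sq₀ (norm_nonneg _) (norm_nonneg _)).1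
    (Complex.real_le_real.1 ((hφ.norm_apply_sq_le a).trans hbound))

lemma im_apply_eq_zero_of_contractive {φ : A →ₗ[ℂ] ℂ} (h_one : φ 1 = 1)
    (hφ : ∀ a, ‖φ a‖ ≤ ‖a‖) {a : A} (ha : IsSelfAdjoint a) : (φ a).im = 0 := by
  have hbound (t : ℝ) : ((φ a).im + t) ^ 2 ≤ ‖a‖ ^ 2 + t ^ 2 := by
    have him : (φ (a + algebraMap ℂ A (t * Complex.I))).im = (φ a).im + t := by
      rw [map_add, Algebra.algebraMap_eq_smul_one, map_smul, h_one, smul_eq_mul, mul_one,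
        Complex.add_im, Complex.im_ofReal_mul, Complex.I_im, mul_one]
    calc ((φ a).im + t) ^ 2
        = (φ (a + algebraMap ℂ A (t * Complex.I))).im ^ 2 := by rw [him]
      _ ≤ ‖φ (a + algebraMap ℂ A (t * Complex.I))‖ ^ 2 :=
        sq_le_sq.2 ((Complex.abs_im_le_norm _).trans_eq (abs_norm _).symm)
      _ ≤ ‖a + algebraMap ℂ A (t * Complex.I)‖ ^ 2 := by gcongr; exact hφ _
      _ ≤ ‖a‖ ^ 2 + t ^ 2 := norm_add_I_mul_sq_le ha t
  by_contra him
  -- The bound says `(Im φ a)² + 2 t Im φ a ≤ ‖a‖²` for all real `t`; take `t = ‖a‖² / (2 Im φ a)`.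
  have hcross : 2 * (φ a).im * (‖a‖ ^ 2 / (2 * (φ a).im)) = ‖a‖ ^ 2 := by field_simp
  have hpos : 0 < (φ a).im ^ 2 := by positivity
  linarith [hbound (‖a‖ ^ 2 / (2 * (φ a).im)), hcross, hpos]

lemma isState_iff_contractive {φ : A →ₗ[ℂ] ℂ} :
    IsState φ ↔ φ 1 = 1 ∧ ∀ a, ‖φ a‖ ≤ ‖a‖ := by
  refine ⟨fun hφ => ⟨hφ.1, hφ.norm_apply_le⟩, fun ⟨h_one, hφ⟩ => ⟨h_one, fun a => ?_⟩⟩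
  have him : (φ (star a * a)).im = 0 :=
    im_apply_eq_zero_of_contractive h_one hφ (.star_mul_self a)
  have hsub : φ (algebraMap ℝ A (‖a‖ ^ 2) - star a * a) = (‖a‖ ^ 2 : ℝ) - φ (star a * a) := by
    rw [map_sub, Algebra.algebraMap_eq_smul_one, ← Complex.coe_smul, map_smul, h_one, smul_eq_mul,
      mul_one]
  have hdist : ‖a‖ ^ 2 - (φ (star a * a)).re ≤ ‖a‖ ^ 2 := by
    calc ‖a‖ ^ 2 - (φ (star a * a)).re
        = (φ (algebraMap ℝ A (‖a‖ ^ 2) - star a * a)).re := by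
          rw [hsub, Complex.sub_re, Complex.ofReal_re]
      _ ≤ ‖φ (algebraMap ℝ A (‖a‖ ^ 2) - star a * a)‖ := Complex.re_le_norm _
      _ ≤ ‖algebraMap ℝ A (‖a‖ ^ 2) - star a * a‖ := hφ _
      _ ≤ ‖a‖ ^ 2 := norm_norm_sq_sub_star_mul_self_le a
  exact Complex.nonneg_iff.2 ⟨by linarith, him.symm⟩

lemma IsState.continuous {φ : A →ₗ[ℂ] ℂ} (hφ : IsState φ) : Continuous φ :=
  AddMonoidHomClass.continuous_of_bound φ 1 fun a => by simpa using hφ.norm_apply_le a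

lemma IsState.exists_extension {C : StarSubalgebra ℂ A} (hC : IsClosed (C : Set A))
    {φ : C →ₗ[ℂ] ℂ} (hφ : IsState φ) :
    ∃ ψ : A →ₗ[ℂ] ℂ, IsState ψ ∧ ψ.comp (inclL C) = φ := by
  have := hC
  let φL : StrongDual ℂ (Subalgebra.toSubmodule C.toSubalgebra) :=
    φ.mkContinuous 1 fun a => by simpa using hφ.norm_apply_le a
  obtain ⟨ψ, hext, hnorm⟩ := exists_extension_norm_eq _ φL
  have hle : ‖ψ‖ ≤ 1 := hnorm.trans_le (φ.mkContinuous_norm_le zero_le_one _)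
  refine ⟨ψ, isState_iff_contractive.2 ⟨(hext (1 : C)).trans hφ.1, fun a => ?_⟩,
    LinearMap.ext fun c => hext c⟩
  simpa using ψ.le_of_opNorm_le hle a

variable (A) in
/-- The state space of `A`, carried by the dual with its weak-* topology so that it is compact. -/
def stateSpace : Set (WeakDual ℂ A) :=
  {φ | IsState (WeakDual.toStrongDual φ : A →ₗ[ℂ] ℂ)}

lemma isCompact_stateSpace : IsCompact (stateSpace A) := by
  have hclosed : IsClosed (stateSpace A) := by
    have hrw : stateSpace A = {φ | φ 1 = 1} ∩ ⋂ a : A, {φ | 0 ≤ φ (star a * a)} := by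
      ext φ
      simp only [Set.mem_inter_iff, Set.mem_iInter]
      rfl
    rw [hrw]
    exact (isClosed_eq (WeakDual.eval_continuous 1) continuous_const).inter <|
      isClosed_iInter fun a => isClosed_le continuous_const (WeakDual.eval_continuous (star a * a))
  refine (WeakDual.isCompact_closedBall 0 1).of_isClosed_subset hclosed fun φ hφ => ?_
  rw [Set.mem_preimage, mem_closedBall_zero_iff]
  exact ContinuousLinearMap.opNorm_le_bound _ zero_le_one fun a => by
    simpa using IsState.norm_apply_le hφ a

end States

section MidpointRigid

variable {A : Type*} [CStarAlgebra A] {g : A →ₗ[ℂ] ℂ} {S T : Set A}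

/-- The relative form of purity used to descend to a subalgebra: states of `A` whose midpoint
agrees with `g` on `T` must agree with each other on `S`. -/
def MidpointRigid (g : A →ₗ[ℂ] ℂ) (T S : Set A) : Prop :=
  ∀ ⦃h₁ h₂ : A →ₗ[ℂ] ℂ⦄, IsState h₁ → IsState h₂ →
    Set.EqOn g ((2 : ℂ)⁻¹ • h₁ + (2 : ℂ)⁻¹ • h₂ : A →ₗ[ℂ] ℂ) T → Set.EqOn h₁ h₂ S

lemma MidpointRigid.mono {T' : Set A} (h : MidpointRigid g T S) (hT : T ⊆ T') :
    MidpointRigid g T' S :=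
  fun _ _ h₁ h₂ hmid => h h₁ h₂ (hmid.mono hT)

lemma MidpointRigid.closure (h : MidpointRigid g T S) : MidpointRigid g T (closure S) :=
  fun _ _ h₁ h₂ hmid => (h h₁ h₂ hmid).closure h₁.continuous h₂.continuous

lemma IsPureState.exists_countable_midpointRigid_singleton (hg : IsPureState g) (a : A) :
    ∃ T : Set A, T.Countable ∧ MidpointRigid g T {a} := by
  let X := WeakDual ℂ A × WeakDual ℂ A
  have heval₁ (x : A) : Continuous fun p : X => p.1 x :=
    (WeakDual.eval_continuous x).comp continuous_fst
  have heval₂ (x : A) : Continuous fun p : X => p.2 x :=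
    (WeakDual.eval_continuous x).comp continuous_snd
  let separated : Set X := (stateSpace A ×ˢ stateSpace A) ∩
    (fun p => p.1 a - p.2 a) ⁻¹' {0}ᶜ
  have hlindelof : IsLindelof separated :=
    isLindelof_inter_preimage_of_isOpen (isCompact_stateSpace.prod isCompact_stateSpace)
      ((heval₁ a).sub (heval₂ a)) isOpen_compl_singleton
  let agrees (x : A) : Set X := {p | g x = (2 : ℂ)⁻¹ * p.1 x + (2 : ℂ)⁻¹ * p.2 x}
  have hclosed (x : A) : IsClosed (agrees x) :=
    isClosed_eq continuous_const (((heval₁ x).const_mul _).add ((heval₂ x).const_mul _))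
  have hempty : separated ∩ ⋂ x, agrees x = ∅ := by
    refine Set.eq_empty_of_forall_notMem fun p ⟨⟨⟨h₁, h₂⟩, hne⟩, hmid⟩ => hne ?_
    have heq := hg.2 _ _ h₁ h₂ (LinearMap.ext fun x => Set.mem_iInter.1 hmid x)
    exact sub_eq_zero.2 (LinearMap.congr_fun heq a)
  obtain ⟨T, hT, hTempty⟩ := hlindelof.elim_countable_subfamily_closed agrees hclosed hempty
  refine ⟨T, hT, fun h₁ h₂ hs₁ hs₂ hmid => Set.eqOn_singleton.2 ?_⟩
  by_contra hne
  let p : X :=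
    (StrongDual.toWeakDual ⟨h₁, hs₁.continuous⟩, StrongDual.toWeakDual ⟨h₂, hs₂.continuous⟩)
  have hp : p ∈ separated ∩ ⋂ x ∈ T, agrees x :=
    ⟨⟨⟨hs₁, hs₂⟩, sub_ne_zero.2 hne⟩, Set.mem_iInter₂.2 fun x hx => hmid hx⟩
  rwa [hTempty] at hp

lemma IsPureState.exists_countable_midpointRigid (hg : IsPureState g) (hS : IsSeparable S) :
    ∃ T : Set A, T.Countable ∧ MidpointRigid g T S := by
  obtain ⟨c, hc, hSc⟩ := hS
  choose T hT hrigid using hg.exists_countable_midpointRigid_singleton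
  have hunion : MidpointRigid g (⋃ a ∈ c, T a) c := fun h₁ h₂ hs₁ hs₂ hmid a ha =>
    (hrigid a).mono (Set.subset_biUnion_of_mem ha) hs₁ hs₂ hmid rfl
  exact ⟨⋃ a ∈ c, T a, hc.biUnion fun a _ => hT a,
    fun h₁ h₂ hs₁ hs₂ hmid => (hunion.closure hs₁ hs₂ hmid).mono hSc⟩

lemma IsPureState.exists_separable_midpointRigid (hg : IsPureState g) (hS : IsSeparable S) :
    ∃ C : StarSubalgebra ℂ A, S ⊆ C ∧ IsSeparable (C : Set A) ∧ MidpointRigid g C S := by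
  obtain ⟨T, hT, hrigid⟩ := hg.exists_countable_midpointRigid hS
  have hsub : S ∪ T ⊆ StarAlgebra.adjoin ℂ (S ∪ T) := StarAlgebra.subset_adjoin ℂ _
  exact ⟨StarAlgebra.adjoin ℂ (S ∪ T), Set.subset_union_left.trans hsub,
    isSeparable_starAdjoin ℂ (hS.union hT.isSeparable),
    hrigid.mono (Set.subset_union_right.trans hsub)⟩

lemma IsPureState.exists_separable_midpointRigid_self (hg : IsPureState g) (hS : IsSeparable S) :
    ∃ C : StarSubalgebra ℂ A, S ⊆ C ∧ IsClosed (C : Set A) ∧ IsSeparable (C : Set A) ∧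
      MidpointRigid g C C := by
  obtain ⟨C₀, hSC₀, hC₀, -⟩ := hg.exists_separable_midpointRigid hS
  choose enlarge hle hsep hrigid using
    fun D : {D : StarSubalgebra ℂ A // IsSeparable (D : Set A)} =>
      hg.exists_separable_midpointRigid D.2
  let K (n : ℕ) : {D : StarSubalgebra ℂ A // IsSeparable (D : Set A)} :=
    (fun D => ⟨enlarge D, hsep D⟩)^[n] ⟨C₀, hC₀⟩
  have hK (n : ℕ) : (K (n + 1)).1 = enlarge (K n) :=
    congrArg Subtype.val (Function.iterate_succ_apply' _ n _)
  have hmono : Monotone fun n => (K n).1 :=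
    monotone_nat_of_le_succ fun n => (hle (K n)).trans_eq (congrArg _ (hK n).symm)
  let U : StarSubalgebra ℂ A := ⨆ n, (K n).1
  have hU : (U : Set A) = ⋃ n, ((K n).1 : Set A) :=
    StarSubalgebra.coe_iSup_of_directed hmono.directed_le
  have hrigidU : MidpointRigid g U U := by
    intro h₁ h₂ hs₁ hs₂ hmid x hx
    obtain ⟨n, hn⟩ := Set.mem_iUnion.1 (hU ▸ hx)
    have hnext : enlarge (K n) ≤ U := hK n ▸ le_iSup (fun m => (K m).1) (n + 1)
    exact (hrigid (K n)).mono hnext hs₁ hs₂ hmid hn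
  refine ⟨U.topologicalClosure, ?_, U.isClosed_topologicalClosure, ?_, ?_⟩
  · exact hSC₀.trans ((le_iSup (fun n => (K n).1) 0).trans U.le_topologicalClosure)
  · rw [StarSubalgebra.topologicalClosure_coe, hU]
    exact (IsSeparable.iUnion fun n => (K n).2).closure
  · exact hrigidU.closure.mono subset_closure

lemma MidpointRigid.isPureState_comp_inclL {C : StarSubalgebra ℂ A} (hC : IsClosed (C : Set A))
    (hg : IsState g) (hrigid : MidpointRigid g C C) : IsPureState (g.comp (inclL C)) := by
  refine ⟨⟨hg.1, fun c => hg.2 c⟩, fun g₁ g₂ hg₁ hg₂ hmid => ?_⟩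
  obtain ⟨h₁, hs₁, rfl⟩ := hg₁.exists_extension hC
  obtain ⟨h₂, hs₂, rfl⟩ := hg₂.exists_extension hC
  have heq : Set.EqOn h₁ h₂ C := hrigid hs₁ hs₂ fun x hx => LinearMap.congr_fun hmid ⟨x, hx⟩
  exact LinearMap.ext fun c => heq c.2

end MidpointRigid

theorem exists_separable_subalgebra_restriction_pure_general {A : Type*} [CStarAlgebra A]
    {S : Set A} (hS : IsSeparable S) {g : A →ₗ[ℂ] ℂ} (hg : IsPureState g) :
    ∃ C : StarSubalgebra ℂ A, S ⊆ C ∧ IsClosed (C : Set A) ∧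
      SeparableSpace C ∧ IsPureState (g.comp (inclL C)) := by
  obtain ⟨C, hSC, hclosed, hsep, hrigid⟩ := hg.exists_separable_midpointRigid_self hS
  exact ⟨C, hSC, hclosed, hsep.separableSpace, hrigid.isPureState_comp_inclL hclosed hg.1⟩

/-- If `B` is a separable C*-subalgebra of an inseparable C*-algebra `A` and `g` is a pure
state of `A`, then there is a separable C*-subalgebra `C ⊇ B` such that `g|_C` is pure. -/
theorem exists_separable_subalgebra_restriction_pure
    (hA : ¬ TopologicalSpace.SeparableSpace A)
    (B : StarSubalgebra ℂ A) (hBclosed : IsClosed (B : Set A))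
    (hBsep : TopologicalSpace.SeparableSpace B)
    (g : A →ₗ[ℂ] ℂ) (hg : IsPureState g) :
    ∃ C : StarSubalgebra ℂ A, B ≤ C ∧ IsClosed (C : Set A) ∧
      TopologicalSpace.SeparableSpace C ∧ IsPureState (g.comp (inclL C)) := by
  let _ : CStarAlgebra A := { }
  exact exists_separable_subalgebra_restriction_pure_general (.of_subtype (B : Set A)) hg
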